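/- Let f be a real-analytic 2π-periodic positive function and let k > 0. If ∫_{-π}^{π} f'(φ) f(φ) (k f(φ) cos φ)^j e^{i k f(φ) sin φ} dφ = 0 for every integer j ≥ 0, then f is constant. -/

import Mathlib

open MeasureTheory Real

/-- Moments to continuous test functions. -/
lemma aux_cont (a b : ℝ) (hab : a ≤ b) (X : ℝ → ℝ) (H : ℝ → ℂ) (hX : Continuous X)
    (hH : Continuous H) (hm : ∀ j : ℕ, ∫ φ in a..b, ((X φ : ℝ) : ℂ) ^ j * H φ = 0)
    (g : ℝ → ℝ) (hg : Continuous g) : ∫ φ in a..b, ((g (X φ) : ℝ) : ℂ) * H φ = 0 := by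
  have hpoly : ∀ p : Polynomial ℝ, ∫ φ in a..b, ((p.eval (X φ) : ℝ) : ℂ) * H φ = 0 := by
    intro p
    have : ∀ φ, ((p.eval (X φ) : ℝ) : ℂ) * H φ
        = ∑ j ∈ Finset.range (p.natDegree + 1), (p.coeff j : ℂ) * (((X φ : ℝ) : ℂ) ^ j * H φ) := by
      intro φ
      rw [Polynomial.eval_eq_sum_range]
      push_cast
      rw [Finset.sum_mul]
      exact Finset.sum_congr rfl fun j _ => by ring
    simp_rw [this]
    rw [intervalIntegral.integral_finsetSum]
    · refine Finset.sum_eq_zero fun j _ => ?_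
      rw [intervalIntegral.integral_const_mul, hm, mul_zero]
    · intro j _
      apply Continuous.intervalIntegrable
      fun_prop
  obtain ⟨C, hC⟩ := (isCompact_Icc (a := a) (b := b)).exists_bound_of_continuousOn hX.continuousOn
  obtain ⟨D, hD⟩ := (isCompact_Icc (a := a) (b := b)).exists_bound_of_continuousOn hH.continuousOn
  have hD0 : 0 ≤ D := (norm_nonneg _).trans (hD a ⟨le_rfl, hab⟩)
  rw [← norm_le_zero_iff]
  refine le_of_forall_pos_le_add fun e he => ?_
  obtain ⟨p, hp⟩ := exists_polynomial_near_of_continuousOn (-C) C g hg.continuousOn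
    (e / ((D + 1) * (b - a + 1))) (div_pos he (mul_pos (by linarith) (by linarith)))
  have e1 : ∫ φ in a..b, ((g (X φ) : ℝ) : ℂ) * H φ
      = ∫ φ in a..b, (((g (X φ) : ℝ) : ℂ) * H φ - ((p.eval (X φ) : ℝ) : ℂ) * H φ) := by
    rw [intervalIntegral.integral_sub, hpoly, sub_zero]
    · apply Continuous.intervalIntegrable; fun_prop
    · apply Continuous.intervalIntegrable
      have := p.continuous
      fun_prop
  rw [e1]
  have hbd := intervalIntegral.norm_integral_le_of_norm_le_const (a := a) (b := b)
    (C := e / ((D + 1) * (b - a + 1)) * D)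
    (f := fun φ => ((g (X φ) : ℝ) : ℂ) * H φ - ((p.eval (X φ) : ℝ) : ℂ) * H φ) (by
      intro φ hφ
      rw [Set.uIoc_of_le hab] at hφ
      have hφ' : φ ∈ Set.Icc a b := ⟨hφ.1.le, hφ.2⟩
      have h1 := hC φ hφ'
      rw [Real.norm_eq_abs, abs_le] at h1
      have h2 := hp (X φ) h1
      rw [← sub_mul, norm_mul, ← Complex.ofReal_sub, Complex.norm_real, Real.norm_eq_abs, abs_sub_comm]
      exact mul_le_mul h2.le (hD φ hφ') (norm_nonneg _) (by
        exact (abs_nonneg _).trans h2.le))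
  refine hbd.trans ?_
  rw [abs_of_nonneg (by linarith), zero_add, div_mul_eq_mul_div, div_mul_eq_mul_div, div_le_iff₀ (mul_pos (by linarith) (by linarith))]
  nlinarith [mul_nonneg he.le hD0, mul_nonneg he.le (sub_nonneg.2 hab)]

/-- local inverse near a simple isolated zero -/
lemma aux_inv (X : ℝ → ℝ) (hX : ∀ x, AnalyticAt ℝ X x) (a b c : ℝ) (hac : a < c) (hcb : c < b)
    (h0 : X c = 0) (hne : ∀ φ ∈ Set.Icc a b, φ ≠ c → X φ ≠ 0) (hd : deriv X c ≠ 0) :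
    ∃ (ψ : ℝ → ℝ) (ε : ℝ), 0 < ε ∧ ψ 0 = c ∧ (∀ t, |t| < ε → ψ t ∈ Set.Ioo a b ∧ X (ψ t) = t ∧
      deriv X (ψ t) ≠ 0 ∧ HasDerivAt ψ (deriv X (ψ t))⁻¹ t) ∧
      ∀ φ ∈ Set.Icc a b, |X φ| < ε → ψ (X φ) = φ := by
  have hs : HasStrictDerivAt X (deriv X c) c := (hX c).hasStrictDerivAt
  set e := (hs.hasStrictFDerivAt_equiv hd).toOpenPartialHomeomorph X with he
  have hcs : c ∈ e.source := HasStrictFDerivAt.mem_toOpenPartialHomeomorph_source _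
  have hct : X c ∈ e.target := HasStrictFDerivAt.image_mem_toOpenPartialHomeomorph_target _
  have heX : ∀ x, e x = X x := fun x => rfl
  have hXc : Continuous X := continuous_iff_continuousAt.2 fun x => (hX x).continuousAt
  have hdc : Continuous (deriv X) := continuous_iff_continuousAt.2 fun x => (hX x).deriv.continuousAt
  -- good neighbourhood of c
  set V : Set ℝ := e.source ∩ Set.Ioo a b ∩ {x | deriv X x ≠ 0} with hV
  have hVo : IsOpen V := (e.open_source.inter isOpen_Ioo).inter (isOpen_ne_fun hdc continuous_const)
  have hcV : c ∈ V := ⟨⟨hcs, hac, hcb⟩, hd⟩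
  have hsymm : e.symm 0 = c := by
    rw [← h0, ← heX, e.left_inv hcs]
  have hev : ∀ᶠ t in nhds (0 : ℝ), t ∈ e.target ∧ e.symm t ∈ V := by
    rw [h0] at hct
    refine Filter.Eventually.and (e.open_target.mem_nhds hct) ?_
    exact (e.continuousAt_symm hct).eventually_mem (by rw [hsymm]; exact hVo.mem_nhds hcV)
  obtain ⟨ε1, hε1, h1⟩ := Metric.eventually_nhds_iff.1 hev
  have hcomp : IsCompact (Set.Icc a b \ V) := isCompact_Icc.diff hVo
  obtain ⟨ε2, hε2, h2⟩ : ∃ ε2 > 0, ∀ φ ∈ Set.Icc a b \ V, ε2 ≤ |X φ| := by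
    rcases (Set.Icc a b \ V).eq_empty_or_nonempty with h | h
    · exact ⟨1, one_pos, by simp [h]⟩
    · obtain ⟨m, hm, hmin⟩ := hcomp.exists_isMinOn h hXc.abs.continuousOn
      refine ⟨|X m|, abs_pos.2 (hne m hm.1 ?_), fun φ hφ => hmin hφ⟩
      rintro rfl
      exact hm.2 hcV
  refine ⟨e.symm, min ε1 ε2, lt_min hε1 hε2, hsymm, ?_, ?_⟩
  · intro t ht
    obtain ⟨ht1, ht2⟩ := h1 (y := t) (by rw [Real.dist_eq, sub_zero]; exact ht.trans_le (min_le_left _ _))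
    refine ⟨ht2.1.2, e.right_inv ht1, ht2.2, ?_⟩
    exact e.hasDerivAt_symm ht1 ht2.2 (hX _).differentiableAt.hasDerivAt
  · intro φ hφ hlt
    have : φ ∈ V := by
      by_contra hn
      exact absurd (h2 φ ⟨hφ, hn⟩) (not_le.2 (hlt.trans_le (min_le_right _ _)))
    exact e.left_inv this.1.1

lemma aux_cov (X : ℝ → ℝ) (a b ε : ℝ) (hab : a ≤ b) (ψ : ℝ → ℝ)
    (h1 : ∀ t, |t| < ε → ψ t ∈ Set.Ioo a b ∧ X (ψ t) = t ∧
      deriv X (ψ t) ≠ 0 ∧ HasDerivAt ψ (deriv X (ψ t))⁻¹ t)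
    (h2 : ∀ φ ∈ Set.Icc a b, |X φ| < ε → ψ (X φ) = φ) (g : ℝ → ℝ)
    (hg : ∀ t, ε ≤ |t| → g t = 0) (H : ℝ → ℂ) :
    ∫ φ in a..b, ((g (X φ) : ℝ) : ℂ) * H φ =
      ∫ t in Set.Ioo (-ε) ε, g t • (((|(deriv X (ψ t))⁻¹| : ℝ) : ℂ) * H (ψ t)) := by
  have hmem : ∀ t, t ∈ Set.Ioo (-ε) ε ↔ |t| < ε := fun t => abs_lt.symm
  have hinj : Set.InjOn ψ (Set.Ioo (-ε) ε) := by
    intro s hs t ht hst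
    rw [← (h1 s ((hmem s).1 hs)).2.1, ← (h1 t ((hmem t).1 ht)).2.1, hst]
  have key := integral_image_eq_integral_abs_deriv_smul (s := Set.Ioo (-ε) ε) measurableSet_Ioo
    (fun t ht => (h1 t ((hmem t).1 ht)).2.2.2.hasDerivWithinAt) hinj
    (fun φ => ((g (X φ) : ℝ) : ℂ) * H φ)
  rw [intervalIntegral.integral_of_le hab]
  trans ∫ φ in ψ '' Set.Ioo (-ε) ε, ((g (X φ) : ℝ) : ℂ) * H φ
  · apply setIntegral_eq_of_subset_of_forall_sdiff_eq_zero measurableSet_Ioc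
    · rintro _ ⟨t, ht, rfl⟩
      have := (h1 t ((hmem t).1 ht)).1
      exact ⟨this.1, this.2.le⟩
    · rintro φ ⟨hφ, hn⟩
      have : ε ≤ |X φ| := by
        by_contra hlt
        rw [not_le] at hlt
        exact hn ⟨X φ, (hmem _).2 hlt, h2 φ ⟨hφ.1.le, hφ.2⟩ hlt⟩
      simp [hg _ this]
  · rw [key]
    refine setIntegral_congr_fun measurableSet_Ioo fun t ht => ?_
    simp only [(h1 t ((hmem t).1 ht)).2.1, Complex.real_smul]
    ring

/-- identity principle along the local inverse -/
lemma aux_id (X : ℝ → ℝ) (hX : Continuous X) (a b ε : ℝ) (ψ : ℝ → ℝ)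
    (h1 : ∀ t, |t| < ε → ψ t ∈ Set.Ioo a b ∧ X (ψ t) = t ∧
      deriv X (ψ t) ≠ 0 ∧ HasDerivAt ψ (deriv X (ψ t))⁻¹ t)
    (h2 : ∀ φ ∈ Set.Icc a b, |X φ| < ε → ψ (X φ) = φ) (F : ℝ → ℝ)
    (hF : ∀ x, AnalyticAt ℝ F x) (t₀ : ℝ) (ht₀ : |t₀| < ε)
    (h : ∀ᶠ t in nhds t₀, deriv F (ψ t) = 0) (x y : ℝ) : F x = F y := by
  have hz : deriv F = 0 := by
    refine AnalyticOnNhd.eq_of_eventuallyEq (𝕜 := ℝ) (z₀ := ψ t₀) (fun x _ => (hF x).deriv)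
      (fun x _ => analyticAt_const) ?_
    have hXt := (h1 t₀ ht₀).2.1
    have c1 : Filter.Tendsto X (nhds (ψ t₀)) (nhds t₀) := by
      have := hX.tendsto (ψ t₀); rwa [hXt] at this
    have c2 : ∀ᶠ t in nhds t₀, |t| < ε := continuous_abs.continuousAt.eventually_lt continuousAt_const ht₀
    filter_upwards [c1.eventually h, c1.eventually c2, isOpen_Ioo.mem_nhds (h1 t₀ ht₀).1] with φ q1 q2 q3
    rw [h2 φ (Set.Ioo_subset_Icc_self q3) q2] at q1
    simpa using q1
  exact is_const_of_deriv_eq_zero (fun x => (hF x).differentiableAt) (fun x => by rw [hz]; rfl) x y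

/-- two phases with real coefficients -/
lemma aux_alg (A B p q : ℝ) (h : (A : ℂ) * Complex.exp (Complex.I * (p : ℂ)) +
    (B : ℂ) * Complex.exp (Complex.I * (q : ℂ)) = 0) :
    A ^ 2 = B ^ 2 ∧ A * Real.sin (p - q) = 0 := by
  rw [mul_comm Complex.I, mul_comm Complex.I, Complex.exp_mul_I, Complex.exp_mul_I,
    ← Complex.ofReal_cos, ← Complex.ofReal_sin, ← Complex.ofReal_cos, ← Complex.ofReal_sin] at h
  have hr := congrArg Complex.re h
  have hi := congrArg Complex.im h
  simp only [Complex.add_re, Complex.add_im, Complex.re_ofReal_mul, Complex.im_ofReal_mul, Complex.ofReal_re,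
    Complex.ofReal_im, Complex.I_re, Complex.I_im, mul_zero, mul_one, add_zero, zero_add,
    Complex.zero_re, Complex.zero_im] at hr hi
  have e1 := Real.sin_sq_add_cos_sq p
  have e2 := Real.sin_sq_add_cos_sq q
  constructor
  · have h3 : (A * cos p) ^ 2 = (B * cos q) ^ 2 := by
      rw [eq_neg_of_add_eq_zero_left hr]; ring
    have h4 : (A * sin p) ^ 2 = (B * sin q) ^ 2 := by
      rw [eq_neg_of_add_eq_zero_left hi]; ring
    linear_combination h3 + h4 - A ^ 2 * e1 + B ^ 2 * e2
  · rw [Real.sin_sub]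
    linear_combination cos q * hi - sin q * hr

/-- reduction of the moment conditions to two pointwise identities on a small interval -/
lemma aux_red (f : ℝ → ℝ) (hf_an : ∀ x : ℝ, AnalyticAt ℝ f x)
    (hpos : ∀ φ, 0 < f φ) (k : ℝ) (hk : 0 < k)
    (X : ℝ → ℝ) (hX : X = fun φ => f φ * Real.cos φ) (hXa : ∀ x, AnalyticAt ℝ X x)
    (hmom : ∀ j : ℕ,
      ∫ φ in (-π)..π, ((deriv f φ * f φ : ℝ) : ℂ) *
        ((k * f φ * Real.cos φ : ℝ) : ℂ) ^ j *
        Complex.exp (Complex.I * ((k * f φ * Real.sin φ : ℝ) : ℂ)) = 0) :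
    ∃ (ψ₁ ψ₂ : ℝ → ℝ) (ε : ℝ), 0 < ε ∧
      (∀ t, |t| < ε → ψ₁ t ∈ Set.Ioo 0 π ∧ X (ψ₁ t) = t ∧
        deriv X (ψ₁ t) ≠ 0 ∧ HasDerivAt ψ₁ (deriv X (ψ₁ t))⁻¹ t) ∧
      (∀ φ ∈ Set.Icc 0 π, |X φ| < ε → ψ₁ (X φ) = φ) ∧
      (∀ t, |t| < ε → ψ₂ t ∈ Set.Ioo (-π) 0 ∧ X (ψ₂ t) = t ∧
        deriv X (ψ₂ t) ≠ 0 ∧ HasDerivAt ψ₂ (deriv X (ψ₂ t))⁻¹ t) ∧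
      (∀ φ ∈ Set.Icc (-π) 0, |X φ| < ε → ψ₂ (X φ) = φ) ∧
      (∀ t, |t| < ε →
        ((deriv X (ψ₁ t))⁻¹ * (deriv f (ψ₁ t) * f (ψ₁ t))) ^ 2 =
          ((deriv X (ψ₂ t))⁻¹ * (deriv f (ψ₂ t) * f (ψ₂ t))) ^ 2 ∧
        (deriv f (ψ₁ t) ≠ 0 →
          Real.sin (k * f (ψ₁ t) * Real.sin (ψ₁ t) - k * f (ψ₂ t) * Real.sin (ψ₂ t)) = 0)) := by
  have hfc : Continuous f := continuous_iff_continuousAt.2 fun x => (hf_an x).continuousAt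
  have hf'c : Continuous (deriv f) :=
    continuous_iff_continuousAt.2 fun x => (hf_an x).deriv.continuousAt
  have hXc : Continuous X := continuous_iff_continuousAt.2 fun x => (hXa x).continuousAt
  have hX'c : Continuous (deriv X) :=
    continuous_iff_continuousAt.2 fun x => (hXa x).deriv.continuousAt
  have hX' : ∀ x, deriv X x = deriv f x * cos x - f x * sin x := by
    intro x
    have := (hf_an x).differentiableAt.hasDerivAt.mul (Real.hasDerivAt_cos x)
    rw [hX]
    refine (HasDerivAt.deriv this).trans ?_
    ring
  have hp := Real.pi_pos
  obtain ⟨ψ₁, ε₁, hε₁, -, p1, p2⟩ := aux_inv X hXa 0 π (π / 2) (by linarith) (by linarith)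
    (by simp [hX]) (by
      intro φ hφ hne
      simp only [hX]
      refine mul_ne_zero (hpos φ).ne' ?_
      intro h0
      exact hne (Real.injOn_cos hφ ⟨by linarith, by linarith⟩ (by rw [h0, Real.cos_pi_div_two])))
    (by rw [hX']; simp [(hpos (π / 2)).ne'])
  obtain ⟨ψ₂, ε₂, hε₂, -, q1, q2⟩ := aux_inv X hXa (-π) 0 (-(π / 2)) (by linarith) (by linarith)
    (by simp [hX]) (by
      intro φ hφ hne
      simp only [hX]
      refine mul_ne_zero (hpos φ).ne' ?_
      intro h0
      have := (Real.injOn_cos (x₁ := -φ) (x₂ := π / 2) ⟨by linarith [hφ.2], by linarith [hφ.1]⟩ ⟨by linarith, by linarith⟩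
        (by rw [Real.cos_neg, h0, Real.cos_pi_div_two]))
      exact hne (by linarith))
    (by rw [hX']; simp [(hpos (-(π / 2))).ne'])
  set ε := min ε₁ ε₂ / 2 with hε
  have hm : 0 < min ε₁ ε₂ := lt_min hε₁ hε₂
  have l1 : ε < ε₁ := by have := min_le_left ε₁ ε₂; linarith
  have l2 : ε < ε₂ := by have := min_le_right ε₁ ε₂; linarith
  have hε0 : 0 < ε := by linarith
  have p1' := fun t (ht : |t| < ε) => p1 t (ht.trans l1)
  have p2' := fun φ hφ (ht : |X φ| < ε) => p2 φ hφ (ht.trans l1)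
  have q1' := fun t (ht : |t| < ε) => q1 t (ht.trans l2)
  have q2' := fun φ hφ (ht : |X φ| < ε) => q2 φ hφ (ht.trans l2)
  refine ⟨ψ₁, ψ₂, ε, hε0, p1', p2', q1', q2', ?_⟩
  set H : ℝ → ℂ := fun φ => ((deriv f φ * f φ : ℝ) : ℂ) *
        Complex.exp (Complex.I * ((k * f φ * Real.sin φ : ℝ) : ℂ)) with hH
  have hHc : Continuous H := by
    rw [hH]; fun_prop
  have hmom' : ∀ j : ℕ, ∫ φ in (-π)..π, ((X φ : ℝ) : ℂ) ^ j * H φ = 0 := by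
    intro j
    have h := hmom j
    have e : ∀ φ, ((deriv f φ * f φ : ℝ) : ℂ) * ((k * f φ * Real.cos φ : ℝ) : ℂ) ^ j *
        Complex.exp (Complex.I * ((k * f φ * Real.sin φ : ℝ) : ℂ)) =
        (k : ℂ) ^ j * (((X φ : ℝ) : ℂ) ^ j * H φ) := by
      intro φ
      simp only [hH, hX, mul_assoc k]
      rw [Complex.ofReal_mul k, mul_pow]
      ring
    simp_rw [e] at h
    rw [intervalIntegral.integral_const_mul] at h
    exact (mul_eq_zero.1 h).resolve_left (pow_ne_zero _ (by exact_mod_cast hk.ne'))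
  set G₁ : ℝ → ℂ := fun t => ((|(deriv X (ψ₁ t))⁻¹| : ℝ) : ℂ) * H (ψ₁ t) with hG₁
  set G₂ : ℝ → ℂ := fun t => ((|(deriv X (ψ₂ t))⁻¹| : ℝ) : ℂ) * H (ψ₂ t) with hG₂
  have c1 : ContinuousOn G₁ (Set.Icc (-ε) ε) := by
    intro t ht
    obtain ⟨-, -, h3, h4⟩ := p1 t ((abs_le.2 ht).trans_lt l1)
    have c : ContinuousAt ψ₁ t := h4.continuousAt
    have cinv : ContinuousAt (fun t => (deriv X (ψ₁ t))⁻¹) t :=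
      (hX'c.continuousAt.comp c).inv₀ h3
    exact ((Complex.continuous_ofReal.continuousAt.comp cinv.abs).mul
      (hHc.continuousAt.comp c)).continuousWithinAt
  have c2 : ContinuousOn G₂ (Set.Icc (-ε) ε) := by
    intro t ht
    obtain ⟨-, -, h3, h4⟩ := q1 t ((abs_le.2 ht).trans_lt l2)
    have c : ContinuousAt ψ₂ t := h4.continuousAt
    have cinv : ContinuousAt (fun t => (deriv X (ψ₂ t))⁻¹) t :=
      (hX'c.continuousAt.comp c).inv₀ h3
    exact ((Complex.continuous_ofReal.continuousAt.comp cinv.abs).mul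
      (hHc.continuousAt.comp c)).continuousWithinAt
  have hsub : Set.Ioo (-ε) ε ⊆ Set.Icc (-ε) ε := Set.Ioo_subset_Icc_self
  have hG : ∀ᵐ t ∂volume, t ∈ Set.Ioo (-ε) ε → (G₁ t + G₂ t) = 0 := by
    apply isOpen_Ioo.ae_eq_zero_of_integral_contDiff_smul_eq_zero
    · exact ((c1.add c2).mono hsub).locallyIntegrableOn measurableSet_Ioo
    · intro g hg _ hgs
      have hg0 : ∀ t, ε ≤ |t| → g t = 0 := by
        intro t ht
        by_contra hne
        have := hgs (subset_tsupport g (Function.mem_support.2 hne))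
        exact absurd (abs_lt.2 this) (not_lt.2 ht)
      have hgc : Continuous g := hg.continuous
      have h0 := aux_cont (-π) π (by linarith) X H hXc hHc hmom' g hgc
      have hint : Continuous fun φ => ((g (X φ) : ℝ) : ℂ) * H φ := by fun_prop
      rw [← intervalIntegral.integral_add_adjacent_intervals (b := 0)
        (hint.intervalIntegrable _ _) (hint.intervalIntegrable _ _),
        aux_cov X (-π) 0 ε (by linarith) ψ₂ q1' q2' g hg0 H,
        aux_cov X 0 π ε (by linarith) ψ₁ p1' p2' g hg0 H] at h0
      rw [← integral_add] at h0
      · rw [← h0, ← setIntegral_eq_integral_of_forall_compl_eq_zero (s := Set.Ioo (-ε) ε)]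
        · refine setIntegral_congr_fun measurableSet_Ioo fun t ht => ?_
          simp only [hG₁, hG₂, smul_add]
          rw [add_comm]
        · intro t ht
          have : ε ≤ |t| := by
            by_contra hlt
            exact ht (abs_lt.1 (not_le.1 hlt))
          simp [hg0 t this]
      · exact ((hgc.continuousOn.smul c2).integrableOn_Icc).mono_set hsub
      · exact ((hgc.continuousOn.smul c1).integrableOn_Icc).mono_set hsub
  have hGz : Set.EqOn (fun t => G₁ t + G₂ t) (fun _ => 0) (Set.Ioo (-ε) ε) := by
    apply Measure.eqOn_open_of_ae_eq (μ := volume)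
    · exact (ae_restrict_iff' measurableSet_Ioo).2 hG
    · exact isOpen_Ioo
    · exact (c1.add c2).mono hsub
    · exact continuousOn_const
  intro t ht
  have hz := hGz (abs_lt.1 ht)
  simp only [hG₁, hG₂, hH, ← mul_assoc] at hz
  rw [← Complex.ofReal_mul, ← Complex.ofReal_mul] at hz
  obtain ⟨r1, r2⟩ := aux_alg _ _ _ _ hz
  constructor
  · simpa only [mul_pow, sq_abs] using r1
  · intro hne
    refine (mul_eq_zero.1 r2).resolve_left ?_
    exact mul_ne_zero (abs_pos.2 (inv_ne_zero (p1' t ht).2.2.1)).ne' (mul_ne_zero hne (ne_of_gt (hpos (ψ₁ t))))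

/-- If `f` is a real-analytic `2π`-periodic positive function, `k > 0`, and the moment
conditions `∫_{-π}^{π} f'(φ) f(φ) (k f(φ) cos φ)^j e^{ik f(φ) sin φ} dφ = 0` hold for
every integer `j ≥ 0`, then `f` is constant. -/
theorem constant_of_all_moment_conditions
    (f : ℝ → ℝ) (hf_an : ∀ x : ℝ, AnalyticAt ℝ f x)
    (hper : Function.Periodic f (2 * π))
    (hpos : ∀ φ, 0 < f φ)
    (k : ℝ) (hk : 0 < k)
    (hmom : ∀ j : ℕ,
      ∫ φ in (-π)..π, ((deriv f φ * f φ : ℝ) : ℂ) *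
        ((k * f φ * Real.cos φ : ℝ) : ℂ) ^ j *
        Complex.exp (Complex.I * ((k * f φ * Real.sin φ : ℝ) : ℂ)) = 0) :
    ∃ c : ℝ, ∀ φ, f φ = c := by
  obtain ⟨X, hX⟩ : ∃ X : ℝ → ℝ, X = fun φ => f φ * Real.cos φ := ⟨_, rfl⟩
  obtain ⟨Y, hY⟩ : ∃ Y : ℝ → ℝ, Y = fun φ => f φ * Real.sin φ := ⟨_, rfl⟩
  have hXa : ∀ x, AnalyticAt ℝ X x := by
    intro x; rw [hX]; exact (hf_an x).mul Real.analyticAt_cos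
  have hYa : ∀ x, AnalyticAt ℝ Y x := by
    intro x; rw [hY]; exact (hf_an x).mul Real.analyticAt_sin
  have hXc : Continuous X := continuous_iff_continuousAt.2 fun x => (hXa x).continuousAt
  have hY'c : Continuous (deriv Y) :=
    continuous_iff_continuousAt.2 fun x => (hYa x).deriv.continuousAt
  have hf'c : Continuous (deriv f) :=
    continuous_iff_continuousAt.2 fun x => (hf_an x).deriv.continuousAt
  have hR : ∀ x, deriv f x * f x = X x * deriv X x + Y x * deriv Y x := by
    intro x
    have d1 := (hf_an x).differentiableAt.hasDerivAt.mul (Real.hasDerivAt_cos x)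
    have d2 := (hf_an x).differentiableAt.hasDerivAt.mul (Real.hasDerivAt_sin x)
    have e1 : deriv X x = deriv f x * cos x + f x * -sin x := by rw [hX]; exact d1.deriv
    have e2 : deriv Y x = deriv f x * sin x + f x * cos x := by rw [hY]; exact d2.deriv
    rw [e1, e2, hX, hY]
    linear_combination (-(deriv f x * f x)) * Real.sin_sq_add_cos_sq x
  have hp := Real.pi_pos
  obtain ⟨ψ₁, ψ₂, ε, hε, p1, p2, q1, q2, hrel⟩ := aux_red f hf_an hpos k hk X hX hXa hmom
  have hball : ∀ s, |s| < ε → ∀ᶠ t in nhds s, |t| < ε := fun s hs =>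
    continuous_abs.continuousAt.eventually_lt continuousAt_const hs
  by_contra hnc
  -- derivatives of the two branches
  have d1 : ∀ t, |t| < ε →
      HasDerivAt (fun t => Y (ψ₁ t)) (deriv Y (ψ₁ t) * (deriv X (ψ₁ t))⁻¹) t := fun t ht =>
    (hYa _).differentiableAt.hasDerivAt.comp t (p1 t ht).2.2.2
  have d2 : ∀ t, |t| < ε →
      HasDerivAt (fun t => Y (ψ₂ t)) (deriv Y (ψ₂ t) * (deriv X (ψ₂ t))⁻¹) t := fun t ht =>
    (hYa _).differentiableAt.hasDerivAt.comp t (q1 t ht).2.2.2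
  have hY1 : ∀ t, |t| < ε → 0 < Y (ψ₁ t) := fun t ht => by
    rw [hY]; exact mul_pos (hpos _) (Real.sin_pos_of_mem_Ioo (p1 t ht).1)
  have hY2 : ∀ t, |t| < ε → Y (ψ₂ t) < 0 := fun t ht => by
    rw [hY]; exact mul_neg_of_pos_of_neg (hpos _) (Real.sin_neg_of_neg_of_neg_pi_lt (q1 t ht).1.2 (q1 t ht).1.1)
  obtain ⟨t₁, ht₁ε, ht₁⟩ : ∃ t, |t| < ε ∧ deriv f (ψ₁ t) ≠ 0 := by
    by_contra hcon
    push Not at hcon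
    have h0 : |(0 : ℝ)| < ε := by simpa using hε
    exact hnc ⟨f 0, fun φ => aux_id X hXc 0 π ε ψ₁ p1 p2 f hf_an 0 h0
      ((hball 0 h0).mono hcon) φ 0⟩
  have hsin : ∀ᶠ t in nhds t₁, Real.sin (k * (Y (ψ₁ t) - Y (ψ₂ t))) = 0 := by
    have c : ContinuousAt (fun t => deriv f (ψ₁ t)) t₁ :=
      hf'c.continuousAt.comp (p1 t₁ ht₁ε).2.2.2.continuousAt
    filter_upwards [hball t₁ ht₁ε, c.eventually_ne ht₁] with t h1 h2
    have := (hrel t h1).2 h2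
    rw [hY, ← this]
    congr 1
    ring
  have hv : ∀ᶠ t in nhds t₁, |t| < ε ∧
      deriv Y (ψ₁ t) * (deriv X (ψ₁ t))⁻¹ = deriv Y (ψ₂ t) * (deriv X (ψ₂ t))⁻¹ ∧
      ((deriv Y (ψ₁ t) * (deriv X (ψ₁ t))⁻¹ = 0) ∨
        2 * t + (Y (ψ₁ t) + Y (ψ₂ t)) * (deriv Y (ψ₁ t) * (deriv X (ψ₁ t))⁻¹) = 0) := by
    filter_upwards [hball t₁ ht₁ε, hsin.eventually_nhds] with t h1 h2
    have hd := (((d1 t h1).sub (d2 t h1)).const_mul k).sin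
    have hd0 := hd.deriv
    have h2' : (fun x => sin (k * ((fun t => Y (ψ₁ t)) - fun t => Y (ψ₂ t)) x)) =ᶠ[nhds t] fun _ => 0 := h2
    rw [h2'.deriv_eq, deriv_const] at hd0
    have hs : Real.sin (k * (Y (ψ₁ t) - Y (ψ₂ t))) = 0 := h2.self_of_nhds
    have hcos : Real.cos (k * (Y (ψ₁ t) - Y (ψ₂ t))) ≠ 0 := by
      intro h
      have := Real.sin_sq_add_cos_sq (k * (Y (ψ₁ t) - Y (ψ₂ t)))
      rw [hs, h] at this
      norm_num at this
    have hvv : deriv Y (ψ₁ t) * (deriv X (ψ₁ t))⁻¹ = deriv Y (ψ₂ t) * (deriv X (ψ₂ t))⁻¹ := by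
      have := (mul_eq_zero.1 hd0.symm).resolve_left hcos
      have := (mul_eq_zero.1 this).resolve_left hk.ne'
      linarith
    refine ⟨h1, hvv, ?_⟩
    have hr := (hrel t h1).1
    have a1 : (deriv X (ψ₁ t))⁻¹ * (deriv f (ψ₁ t) * f (ψ₁ t)) =
        t + Y (ψ₁ t) * (deriv Y (ψ₁ t) * (deriv X (ψ₁ t))⁻¹) := by
      have := (p1 t h1).2.2.1
      rw [hR, (p1 t h1).2.1]; field_simp
    have a2 : (deriv X (ψ₂ t))⁻¹ * (deriv f (ψ₂ t) * f (ψ₂ t)) =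
        t + Y (ψ₂ t) * (deriv Y (ψ₂ t) * (deriv X (ψ₂ t))⁻¹) := by
      have := (q1 t h1).2.2.1
      rw [hR, (q1 t h1).2.1]; field_simp
    rw [a1, a2, ← hvv] at hr
    have hpos' : Y (ψ₁ t) - Y (ψ₂ t) ≠ 0 := by
      have := hY1 t h1
      have := hY2 t h1
      linarith
    have hprod : (Y (ψ₁ t) - Y (ψ₂ t)) * ((deriv Y (ψ₁ t) * (deriv X (ψ₁ t))⁻¹) *
        (2 * t + (Y (ψ₁ t) + Y (ψ₂ t)) * (deriv Y (ψ₁ t) * (deriv X (ψ₁ t))⁻¹))) = 0 := by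
      linear_combination hr
    exact mul_eq_zero.1 ((mul_eq_zero.1 hprod).resolve_left hpos')
  have hYend : Y 0 ≠ Y (π / 2) := by
    rw [hY]; simp only [Real.sin_zero, Real.sin_pi_div_two, mul_zero, mul_one]
    exact (hpos _).ne
  have hfreq : ∃ᶠ t in nhds t₁, deriv Y (ψ₁ t) ≠ 0 := by
    intro hcon
    exact hYend (aux_id X hXc 0 π ε ψ₁ p1 p2 Y hYa t₁ ht₁ε
      (hcon.mono fun t ht => by simpa using ht) _ _)
  obtain ⟨t₂, hne₂, hev₂⟩ := (hfreq.and_eventually hv.eventually_nhds).exists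
  have ht₂ε : |t₂| < ε := hev₂.self_of_nhds.1
  have hgood : ∀ᶠ t in nhds t₂, |t| < ε ∧
      deriv Y (ψ₁ t) * (deriv X (ψ₁ t))⁻¹ = deriv Y (ψ₂ t) * (deriv X (ψ₂ t))⁻¹ ∧
        2 * t + (Y (ψ₁ t) + Y (ψ₂ t)) * (deriv Y (ψ₁ t) * (deriv X (ψ₁ t))⁻¹) = 0 := by
    have c : ContinuousAt (fun t => deriv Y (ψ₁ t)) t₂ :=
      hY'c.continuousAt.comp (p1 t₂ ht₂ε).2.2.2.continuousAt
    filter_upwards [hev₂, c.eventually_ne hne₂] with t h1 h2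
    exact ⟨h1.1, h1.2.1, h1.2.2.resolve_left
      (mul_ne_zero h2 (inv_ne_zero (p1 t h1.1).2.2.1))⟩
  obtain ⟨δ, hδ, hδg⟩ := Metric.eventually_nhds_iff_ball.1 hgood
  obtain ⟨c, hc⟩ : ∃ c, c = Y (ψ₁ t₂) - Y (ψ₂ t₂) := ⟨_, rfl⟩
  have hcpos : 0 < c := by
    have := hY1 t₂ ht₂ε
    have := hY2 t₂ ht₂ε
    linarith
  have hconst : ∀ t ∈ Metric.ball t₂ δ, Y (ψ₁ t) - Y (ψ₂ t) = c := by
    intro t ht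
    rw [hc]
    refine Metric.isOpen_ball.is_const_of_deriv_eq_zero (𝕜 := ℝ) (s := Metric.ball t₂ δ)
      (f := fun t => Y (ψ₁ t) - Y (ψ₂ t))
      (convex_ball t₂ δ).isPreconnected ?_ ?_ ht (Metric.mem_ball_self hδ)
    · intro s hs
      have h1 := (hδg s hs).1
      exact ((d1 s h1).sub (d2 s h1)).differentiableAt.differentiableWithinAt
    · intro s hs
      have h1 := hδg s hs
      have := ((d1 s h1.1).sub (d2 s h1.1)).deriv
      rw [h1.2.1, sub_self] at this
      exact this
  have hF : ∀ a x : ℝ, deriv (fun x => f x ^ 2 + a * Y x) x = 2 * (deriv f x * f x) + a * deriv Y x := by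
    intro a x
    have h := ((hf_an x).differentiableAt.hasDerivAt.pow 2).add
      ((hYa x).differentiableAt.hasDerivAt.const_mul a)
    refine h.deriv.trans ?_
    simp; ring
  have hFa : ∀ a x : ℝ, AnalyticAt ℝ (fun x => f x ^ 2 + a * Y x) x := fun a x =>
    ((hf_an x).pow 2).add (analyticAt_const.mul (hYa x))
  have E1 := aux_id X hXc 0 π ε ψ₁ p1 p2 (fun x => f x ^ 2 + (-c) * Y x) (hFa _) t₂ ht₂ε (by
    filter_upwards [Metric.ball_mem_nhds t₂ hδ] with t ht
    obtain ⟨h1, h2, h3⟩ := hδg t ht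
    have hx := (p1 t h1).2.2.1
    rw [hF, hR, (p1 t h1).2.1, ← hconst t ht]
    have h4 : deriv Y (ψ₁ t) = (deriv Y (ψ₁ t) * (deriv X (ψ₁ t))⁻¹) * deriv X (ψ₁ t) := by
      field_simp
    rw [h4]
    linear_combination deriv X (ψ₁ t) * h3) 0 (π / 2)
  have E2 := aux_id X hXc (-π) 0 ε ψ₂ q1 q2 (fun x => f x ^ 2 + c * Y x) (hFa _) t₂ ht₂ε (by
    filter_upwards [Metric.ball_mem_nhds t₂ hδ] with t ht
    obtain ⟨h1, h2, h3⟩ := hδg t ht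
    have hx := (q1 t h1).2.2.1
    rw [hF, hR, (q1 t h1).2.1, ← hconst t ht]
    have h4 : deriv Y (ψ₂ t) = (deriv Y (ψ₂ t) * (deriv X (ψ₂ t))⁻¹) * deriv X (ψ₂ t) := by
      field_simp
    rw [h2] at h3
    rw [h4]
    linear_combination deriv X (ψ₂ t) * h3) 0 (π / 2)
  have : c * (Y 0 - Y (π / 2)) = 0 := by
    linarith
  exact (mul_ne_zero hcpos.ne' (sub_ne_zero.2 hYend)) this
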